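/- arXiv:2401.08078 — 3 statements merged into one kernel-verified Lean document; each statement's English description precedes it below -/
import Mathlib

section
/- Let 𝒜 be a weakly idempotent complete exact category and (𝒳,𝒴) a hereditary complete cotorsion pair in 𝒜 with ω = 𝒳∩𝒴. Let α : A→B be a morphism in Weq_ω. Then for every right ω-approximation t : W→B of B, the morphism (α,t) : A⊕W→B is a deflation with kernel in 𝒴 (i.e. (α,t) ∈ TFib_ω). -/
open CategoryTheory Limits ZeroObject

universe v u

/-- An exact structure (Quillen exact category) on an additive category `𝒜`:
a class of conflations (kernel-cokernel pairs), closed under isomorphisms,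
with identities deflations, deflations closed under composition and stable
under pullback, and inflations stable under pushout. -/
structure ExactStructure (𝒜 : Type u) [Category.{v} 𝒜] [Preadditive 𝒜]
    [HasZeroObject 𝒜] [HasBinaryBiproducts 𝒜] : Type (max u v) where
  conflation : ∀ ⦃X Y Z : 𝒜⦄, (X ⟶ Y) → (Y ⟶ Z) → Prop
  comp_zero : ∀ {X Y Z : 𝒜} {i : X ⟶ Y} {d : Y ⟶ Z}, conflation i d → i ≫ d = 0
  isKernel : ∀ {X Y Z : 𝒜} {i : X ⟶ Y} {d : Y ⟶ Z} (h : conflation i d),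
    Nonempty (IsLimit (KernelFork.ofι i (comp_zero h)))
  isCokernel : ∀ {X Y Z : 𝒜} {i : X ⟶ Y} {d : Y ⟶ Z} (h : conflation i d),
    Nonempty (IsColimit (CokernelCofork.ofπ d (comp_zero h)))
  conflation_iso : ∀ {X Y Z X' Y' Z' : 𝒜} {i : X ⟶ Y} {d : Y ⟶ Z}
    (eX : X ≅ X') (eY : Y ≅ Y') (eZ : Z ≅ Z') {i' : X' ⟶ Y'} {d' : Y' ⟶ Z'},
    conflation i d → i ≫ eY.hom = eX.hom ≫ i' → d ≫ eZ.hom = eY.hom ≫ d' →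
    conflation i' d'
  id_deflation : ∀ X : 𝒜, conflation (0 : (0 : 𝒜) ⟶ X) (𝟙 X)
  deflation_comp : ∀ {X Y Z X' W : 𝒜} {i : X ⟶ Y} {d : Y ⟶ Z} {i' : X' ⟶ Z} {d' : Z ⟶ W},
    conflation i d → conflation i' d' → ∃ (K : 𝒜) (k : K ⟶ Y), conflation k (d ≫ d')
  pullback_deflation : ∀ {X Y Z Z' : 𝒜} {i : X ⟶ Y} {d : Y ⟶ Z},
    conflation i d → ∀ (f : Z' ⟶ Z),
    ∃ (Y' : 𝒜) (f' : Y' ⟶ Y) (d' : Y' ⟶ Z') (K : 𝒜) (k : K ⟶ Y'),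
      IsPullback f' d' d f ∧ conflation k d'
  pushout_inflation : ∀ {X Y Z X' : 𝒜} {i : X ⟶ Y} {d : Y ⟶ Z},
    conflation i d → ∀ (f : X ⟶ X'),
    ∃ (Y' : 𝒜) (f' : Y ⟶ Y') (i' : X' ⟶ Y') (Q : 𝒜) (q : Y' ⟶ Q),
      IsPushout i f f' i' ∧ conflation i' q

variable {𝒜 : Type u} [Category.{v} 𝒜] [Preadditive 𝒜] [HasZeroObject 𝒜]
  [HasBinaryBiproducts 𝒜]

/-- `f` is an inflation: the first map of some conflation. -/
def IsInflation (E : ExactStructure 𝒜) {X Y : 𝒜} (i : X ⟶ Y) : Prop :=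
  ∃ (Z : 𝒜) (d : Y ⟶ Z), E.conflation i d

/-- `f` is a deflation: the second map of some conflation. -/
def IsDeflation (E : ExactStructure 𝒜) {Y Z : 𝒜} (d : Y ⟶ Z) : Prop :=
  ∃ (X : 𝒜) (i : X ⟶ Y), E.conflation i d

/-- `𝒜` is weakly idempotent complete: every split epimorphism is a deflation. -/
def IsWIC (E : ExactStructure 𝒜) : Prop :=
  ∀ {X Y : 𝒜} (d : X ⟶ Y) (s : Y ⟶ X), s ≫ d = 𝟙 Y → IsDeflation E d

/-- `Ext¹(A,B) = 0`: every conflation `B ⟶ M ⟶ A` splits. -/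
def Ext1IsZero (E : ExactStructure 𝒜) (A B : 𝒜) : Prop :=
  ∀ {M : 𝒜} (i : B ⟶ M) (d : M ⟶ A), E.conflation i d → ∃ r : M ⟶ B, i ≫ r = 𝟙 B

/-- `(X, Y)` is a cotorsion pair: each class is the `Ext¹`-orthogonal of the other. -/
def IsCotorsionPair (E : ExactStructure 𝒜) (X Y : Set 𝒜) : Prop :=
  (∀ A : 𝒜, A ∈ X ↔ ∀ B ∈ Y, Ext1IsZero E A B) ∧
  (∀ B : 𝒜, B ∈ Y ↔ ∀ A ∈ X, Ext1IsZero E A B)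

/-- Completeness of a cotorsion pair: every object has approximation sequences. -/
def IsCompleteCP (E : ExactStructure 𝒜) (X Y : Set 𝒜) : Prop :=
  ∀ A : 𝒜,
    (∃ (Y₀ X₀ : 𝒜) (i : Y₀ ⟶ X₀) (d : X₀ ⟶ A), E.conflation i d ∧ X₀ ∈ X ∧ Y₀ ∈ Y) ∧
    (∃ (Y₁ X₁ : 𝒜) (i : A ⟶ Y₁) (d : Y₁ ⟶ X₁), E.conflation i d ∧ X₁ ∈ X ∧ Y₁ ∈ Y)

/-- Heredity of a cotorsion pair: `X` is closed under kernels of deflations and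
`Y` is closed under cokernels of inflations. -/
def IsHereditaryCP (E : ExactStructure 𝒜) (X Y : Set 𝒜) : Prop :=
  (∀ {K A B : 𝒜} (i : K ⟶ A) (d : A ⟶ B), E.conflation i d → A ∈ X → B ∈ X → K ∈ X) ∧
  (∀ {K A B : 𝒜} (i : K ⟶ A) (d : A ⟶ B), E.conflation i d → K ∈ Y → A ∈ Y → B ∈ Y)

/-- `t : W ⟶ B` is a right `ω`-approximation of `B`. -/
def IsRightApprox (ω : Set 𝒜) {W B : 𝒜} (t : W ⟶ B) : Prop :=
  W ∈ ω ∧ ∀ (W' : 𝒜), W' ∈ ω → ∀ g : W' ⟶ B, ∃ h : W' ⟶ W, h ≫ t = g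

/-- `ω` is contravariantly finite: every object has a right `ω`-approximation. -/
def IsContravariantlyFinite (ω : Set 𝒜) : Prop :=
  ∀ B : 𝒜, ∃ (W : 𝒜) (t : W ⟶ B), IsRightApprox ω t

/-- A full additive subcategory closed under isomorphisms and direct summands,
viewed as a class of objects. -/
def AdditivelyClosed (S : Set 𝒜) : Prop :=
  (0 : 𝒜) ∈ S ∧ (∀ A B : 𝒜, A ∈ S → B ∈ S → (A ⊞ B) ∈ S) ∧
  (∀ {A B : 𝒜}, (A ≅ B) → A ∈ S → B ∈ S) ∧
  (∀ {A B : 𝒜} (i : A ⟶ B) (r : B ⟶ A), i ≫ r = 𝟙 A → B ∈ S → A ∈ S)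

/-- `CoFib_ω`: inflations with cokernel in `X`. -/
def CoFibO (E : ExactStructure 𝒜) (X : Set 𝒜) : MorphismProperty 𝒜 :=
  fun _ B f => ∃ (Z : 𝒜) (d : B ⟶ Z), E.conflation f d ∧ Z ∈ X

/-- `Fib_ω`: the `ω`-epic morphisms. -/
def FibO (ω : Set 𝒜) : MorphismProperty 𝒜 :=
  fun A B f => ∀ (W : 𝒜), W ∈ ω → ∀ g : W ⟶ B, ∃ h : W ⟶ A, h ≫ f = g

/-- `Weq_ω`: morphisms `f : A ⟶ B` such that for some `W ∈ ω` and `t : W ⟶ B`,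
`(f,t) : A ⊞ W ⟶ B` is a deflation with kernel in `Y`. -/
def WeqO (E : ExactStructure 𝒜) (ω Y : Set 𝒜) : MorphismProperty 𝒜 :=
  fun A B f => ∃ (W : 𝒜) (_ : W ∈ ω) (t : W ⟶ B) (K : 𝒜) (k : K ⟶ A ⊞ W),
    E.conflation k (biprod.desc f t) ∧ K ∈ Y

/-- `TCoFib_ω`: split monomorphisms with cokernel in `ω`. -/
def TCoFibO (E : ExactStructure 𝒜) (ω : Set 𝒜) : MorphismProperty 𝒜 :=
  fun A B f => (∃ r : B ⟶ A, f ≫ r = 𝟙 A) ∧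
    ∃ (Z : 𝒜) (d : B ⟶ Z), E.conflation f d ∧ Z ∈ ω

/-- `TFib_ω`: deflations with kernel in `Y`. -/
def TFibO (E : ExactStructure 𝒜) (Y : Set 𝒜) : MorphismProperty 𝒜 :=
  fun A _ f => ∃ (K : 𝒜) (k : K ⟶ A), E.conflation k f ∧ K ∈ Y

/-- `g` is a retract of `f`. -/
def IsRetractMor {A' B' A B : 𝒜} (g : A' ⟶ B') (f : A ⟶ B) : Prop :=
  ∃ (φ₁ : A' ⟶ A) (ψ₁ : A ⟶ A') (φ₂ : B' ⟶ B) (ψ₂ : B ⟶ B'),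
    φ₁ ≫ ψ₁ = 𝟙 A' ∧ φ₂ ≫ ψ₂ = 𝟙 B' ∧ φ₁ ≫ f = g ≫ φ₂ ∧ f ≫ ψ₂ = ψ₁ ≫ g

/-- A (closed, Quillen) model structure, given by classes of cofibrations,
fibrations and weak equivalences. -/
structure IsModelStructure (C F W : MorphismProperty 𝒜) : Prop where
  weq_comp : ∀ {X Y Z : 𝒜} (f : X ⟶ Y) (g : Y ⟶ Z), W f → W g → W (f ≫ g)
  weq_cancel_left : ∀ {X Y Z : 𝒜} (f : X ⟶ Y) (g : Y ⟶ Z), W f → W (f ≫ g) → W g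
  weq_cancel_right : ∀ {X Y Z : 𝒜} (f : X ⟶ Y) (g : Y ⟶ Z), W g → W (f ≫ g) → W f
  retract_cofib : ∀ {A' B' A B : 𝒜} (g : A' ⟶ B') (f : A ⟶ B),
    IsRetractMor g f → C f → C g
  retract_fib : ∀ {A' B' A B : 𝒜} (g : A' ⟶ B') (f : A ⟶ B),
    IsRetractMor g f → F f → F g
  retract_weq : ∀ {A' B' A B : 𝒜} (g : A' ⟶ B') (f : A ⟶ B),
    IsRetractMor g f → W f → W g
  lifting_left : ∀ {A B X Y : 𝒜} (i : A ⟶ B) (p : X ⟶ Y) (a : A ⟶ X) (b : B ⟶ Y),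
    C i → W i → F p → a ≫ p = i ≫ b → ∃ s : B ⟶ X, i ≫ s = a ∧ s ≫ p = b
  lifting_right : ∀ {A B X Y : 𝒜} (i : A ⟶ B) (p : X ⟶ Y) (a : A ⟶ X) (b : B ⟶ Y),
    C i → F p → W p → a ≫ p = i ≫ b → ∃ s : B ⟶ X, i ≫ s = a ∧ s ≫ p = b
  fact_left : ∀ {A B : 𝒜} (f : A ⟶ B), ∃ (Z : 𝒜) (i : A ⟶ Z) (p : Z ⟶ B),
    i ≫ p = f ∧ C i ∧ W i ∧ F p
  fact_right : ∀ {A B : 𝒜} (f : A ⟶ B), ∃ (Z : 𝒜) (j : A ⟶ Z) (q : Z ⟶ B),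
    j ≫ q = f ∧ C j ∧ F q ∧ W q

/-- An object is cofibrant if `0 ⟶ X` is a cofibration. -/
def Cofibrant (C : MorphismProperty 𝒜) (A : 𝒜) : Prop := C (0 : (0 : 𝒜) ⟶ A)

/-- An object is fibrant if `X ⟶ 0` is a fibration. -/
def Fibrant (F : MorphismProperty 𝒜) (A : 𝒜) : Prop := F (0 : A ⟶ (0 : 𝒜))

/-- An object is trivial if `0 ⟶ X` is a weak equivalence. -/
def TrivialObj (W : MorphismProperty 𝒜) (A : 𝒜) : Prop := W (0 : (0 : 𝒜) ⟶ A)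

/-- `P` is projective in the exact category. -/
def IsProjObj (E : ExactStructure 𝒜) (P : 𝒜) : Prop :=
  ∀ {A B : 𝒜} (d : A ⟶ B), IsDeflation E d → ∀ g : P ⟶ B, ∃ h : P ⟶ A, h ≫ d = g

/-- The exact category has enough projective objects. -/
def HasEnoughProj (E : ExactStructure 𝒜) : Prop :=
  ∀ X : 𝒜, ∃ (P : 𝒜) (d : P ⟶ X), IsProjObj E P ∧ IsDeflation E d

/-- Cofibrations are exactly the inflations with cofibrant cokernel. -/
def CofibsAreInflWithCofibCoker (E : ExactStructure 𝒜) (C : MorphismProperty 𝒜) : Prop :=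
  ∀ {A B : 𝒜} (f : A ⟶ B),
    C f ↔ ∃ (Z : 𝒜) (d : B ⟶ Z), E.conflation f d ∧ Cofibrant C Z

/-- Fibrations are exactly the deflations with fibrant kernel. -/
def FibsAreDeflWithFibKer (E : ExactStructure 𝒜) (F : MorphismProperty 𝒜) : Prop :=
  ∀ {A B : 𝒜} (f : A ⟶ B),
    F f ↔ ∃ (K : 𝒜) (k : K ⟶ A), E.conflation k f ∧ Fibrant F K

/-- Trivial fibrations are exactly the deflations with trivially fibrant kernel. -/
def TrivFibsAreDeflWithTrivFibKer (E : ExactStructure 𝒜)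
    (F W : MorphismProperty 𝒜) : Prop :=
  ∀ {A B : 𝒜} (f : A ⟶ B),
    (F f ∧ W f) ↔ ∃ (K : 𝒜) (k : K ⟶ A), E.conflation k f ∧ Fibrant F K ∧ TrivialObj W K

/-- Every cofibration is an inflation. -/
def CofibsAreInfl (E : ExactStructure 𝒜) (C : MorphismProperty 𝒜) : Prop :=
  ∀ {A B : 𝒜} (f : A ⟶ B), C f → IsInflation E f

/-- Every trivial fibration is a deflation. -/
def TrivFibsAreDefl (E : ExactStructure 𝒜) (F W : MorphismProperty 𝒜) : Prop :=
  ∀ {A B : 𝒜} (f : A ⟶ B), F f → W f → IsDeflation E f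

/-- An exact model structure in the sense of Gillespie. -/
def IsExactModelStr (E : ExactStructure 𝒜) (C F W : MorphismProperty 𝒜) : Prop :=
  IsModelStructure C F W ∧ CofibsAreInflWithCofibCoker E C ∧ FibsAreDeflWithFibKer E F

/-- A weakly projective model structure: every object is fibrant, cofibrations are
exactly the inflations with cofibrant cokernel, and trivial fibrations are exactly
the deflations with trivially fibrant kernel. -/
def IsWeaklyProjModelStr (E : ExactStructure 𝒜) (C F W : MorphismProperty 𝒜) : Prop :=
  IsModelStructure C F W ∧ (∀ A : 𝒜, Fibrant F A) ∧
    CofibsAreInflWithCofibCoker E C ∧ TrivFibsAreDeflWithTrivFibKer E F W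

/-- A projective model structure: an exact model structure with every object fibrant. -/
def IsProjectiveModelStr (E : ExactStructure 𝒜) (C F W : MorphismProperty 𝒜) : Prop :=
  IsExactModelStr E C F W ∧ (∀ A : 𝒜, Fibrant F A)

/-- A class of objects is thick: closed under direct summands and two-out-of-three
in conflations. -/
def IsThick (E : ExactStructure 𝒜) (S : Set 𝒜) : Prop :=
  (∀ {A B : 𝒜} (i : A ⟶ B) (r : B ⟶ A), i ≫ r = 𝟙 A → B ∈ S → A ∈ S) ∧
  (∀ {X Y Z : 𝒜} (i : X ⟶ Y) (d : Y ⟶ Z), E.conflation i d →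
    ((X ∈ S → Y ∈ S → Z ∈ S) ∧ (X ∈ S → Z ∈ S → Y ∈ S) ∧ (Y ∈ S → Z ∈ S → X ∈ S)))


/-!
Let `t' : W' ⟶ B` witness `α ∈ Weq_ω`, so that `(α, t')` is a deflation with kernel in `𝒴`. Since
`Ext¹(W, 𝒴) = 0`, the map `t` factors through `(α, t')`, hence `(α, t', t)` is still a deflation,
and its kernel is that of `(α, t')` plus `W`. Since `t` is a right `ω`-approximation, `t'` factors
through `t`, which makes `A ⊞ W` a retract of `(A ⊞ W') ⊞ W` over `B`. In a weakly idempotent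
complete exact category, deflations with kernel in `𝒴` pass to retracts over a fixed target.
-/

namespace ExactStructure

variable (E : ExactStructure 𝒜) {P Q R T : 𝒜} {i : P ⟶ Q} {d : Q ⟶ R}

lemma mono_of_conflation (h : E.conflation i d) : Mono i :=
  mono_of_isLimit_fork (E.isKernel h).some

lemma epi_of_conflation (h : E.conflation i d) : Epi d :=
  epi_of_isColimit_cofork (E.isCokernel h).some

lemma exists_lift (h : E.conflation i d) (a : T ⟶ Q) (ha : a ≫ d = 0) : ∃ b : T ⟶ P, b ≫ i = a :=
  have ⟨b, hb⟩ := KernelFork.IsLimit.lift' (E.isKernel h).some a ha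
  ⟨b, hb⟩

lemma exists_desc (h : E.conflation i d) (a : Q ⟶ T) (ha : i ≫ a = 0) : ∃ b : R ⟶ T, d ≫ b = a :=
  have ⟨b, hb⟩ := CokernelCofork.IsColimit.desc' (E.isCokernel h).some a ha
  ⟨b, hb⟩

lemma conflation_of_mono {P' : 𝒜} (h : E.conflation i d) {i' : P' ⟶ Q} [Mono i'] (w : i' ≫ d = 0)
    {a : P ⟶ P'} (ha : a ≫ i' = i) : E.conflation i' d := by
  have := E.mono_of_conflation h
  obtain ⟨b, hb⟩ := E.exists_lift h i' w
  let e : P ≅ P' :=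
    { hom := a
      inv := b
      hom_inv_id := by simp [← cancel_mono i, ha, hb]
      inv_hom_id := by simp [← cancel_mono i', ha, hb] }
  exact E.conflation_iso e (Iso.refl Q) (Iso.refl R) h (by simp [e, ha]) (by simp)

lemma conflation_of_epi {R' : 𝒜} (h : E.conflation i d) {d' : Q ⟶ R'} [Epi d'] (w : i ≫ d' = 0)
    {a : R' ⟶ R} (ha : d' ≫ a = d) : E.conflation i d' := by
  have := E.epi_of_conflation h
  obtain ⟨b, hb⟩ := E.exists_desc h d' w
  let e : R ≅ R' :=
    { hom := b
      inv := a
      hom_inv_id := by simp [← cancel_epi d, reassoc_of% hb, ha]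
      inv_hom_id := by simp [← cancel_epi d', reassoc_of% ha, hb] }
  exact E.conflation_iso (Iso.refl P) (Iso.refl Q) e h (by simp) (by simp [e, hb])

lemma conflation_of_isPullback {Q' R' : 𝒜} (h : E.conflation i d) {t : R' ⟶ R} {f' : Q' ⟶ Q}
    {d' : Q' ⟶ R'} (hp : IsPullback f' d' d t) {i' : P ⟶ Q'} (hi : i' ≫ f' = i)
    (w : i' ≫ d' = 0) : E.conflation i' d' := by
  obtain ⟨Q₁, f₁, d₁, K, k, hp₁, hk⟩ := E.pullback_deflation h t
  let e : Q₁ ≅ Q' := hp₁.isoIsPullback _ _ hp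
  have hk' : E.conflation (k ≫ e.hom) d' :=
    E.conflation_iso (Iso.refl K) e (Iso.refl R') hk (by simp) (by simp [e])
  have := E.mono_of_conflation h
  have : Mono i' := mono_of_mono_fac hi
  obtain ⟨a, ha⟩ := E.exists_lift h ((k ≫ e.hom) ≫ f') (by
    rw [Category.assoc, hp.w, ← Category.assoc, E.comp_zero hk', zero_comp])
  refine E.conflation_of_mono hk' w (a := a) (hp.hom_ext ?_ ?_)
  · rw [Category.assoc, hi, ha]
  · rw [Category.assoc, w, Limits.comp_zero, E.comp_zero hk']

lemma conflation_of_isPushout {P' Q' : 𝒜} (h : E.conflation i d) {f : P ⟶ P'} {f' : Q ⟶ Q'}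
    {i' : P' ⟶ Q'} (hp : IsPushout i f f' i') {d' : Q' ⟶ R} (hd : f' ≫ d' = d)
    (w : i' ≫ d' = 0) : E.conflation i' d' := by
  obtain ⟨Q₁, f₁, i₁, C, c, hp₁, hc⟩ := E.pushout_inflation h f
  let e : Q₁ ≅ Q' := hp₁.isoIsPushout _ _ hp
  have hc' : E.conflation i' (e.inv ≫ c) :=
    E.conflation_iso (Iso.refl P') e (Iso.refl C) hc (by simp [e]) (by simp)
  have := E.epi_of_conflation h
  have : Epi d' := epi_of_epi_fac hd
  obtain ⟨a, ha⟩ := E.exists_desc h (f' ≫ e.inv ≫ c) (by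
    rw [← Category.assoc, hp.w, Category.assoc, E.comp_zero hc',
      Limits.comp_zero])
  refine E.conflation_of_epi hc' w (a := a) (hp.hom_ext ?_ ?_)
  · rw [← Category.assoc, hd, ha]
  · rw [← Category.assoc, w, zero_comp, E.comp_zero hc']

lemma exists_section_of_retraction (h : E.conflation i d) {r : Q ⟶ P} (hr : i ≫ r = 𝟙 P) :
    ∃ s : R ⟶ Q, s ≫ d = 𝟙 R := by
  obtain ⟨s, hs⟩ := E.exists_desc h (𝟙 Q - r ≫ i) (by simp [reassoc_of% hr])
  have := E.epi_of_conflation h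
  exact ⟨s, by simp [← cancel_epi d, reassoc_of% hs, E.comp_zero h]⟩

lemma exists_retraction_of_section (h : E.conflation i d) {s : R ⟶ Q} (hs : s ≫ d = 𝟙 R) :
    ∃ r : Q ⟶ P, i ≫ r = 𝟙 P ∧ r ≫ i + d ≫ s = 𝟙 Q := by
  obtain ⟨r, hr⟩ := E.exists_lift h (𝟙 Q - d ≫ s) (by simp [hs])
  have := E.mono_of_conflation h
  refine ⟨r, ?_, by rw [hr, sub_add_cancel]⟩
  rw [← cancel_mono i, Category.assoc, hr, Preadditive.comp_sub, ← Category.assoc, E.comp_zero h]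
  simp

/-- Since `r` is split, the kernel of `f` is the image of `k ≫ r`; the conflation `(k', f)` is then
the pushout of `(k, r ≫ f)` along `ρ`. -/
lemma conflation_of_splitEpi_comp {K K' M M' B : 𝒜} {k : K ⟶ M} {r : M ⟶ M'} {f : M' ⟶ B}
    (h : E.conflation k (r ≫ f)) {s : M' ⟶ M} (hs : s ≫ r = 𝟙 M') {ρ : K ⟶ K'} {k' : K' ⟶ M'}
    [Mono k'] (hρ : ρ ≫ k' = k ≫ r) (w : k' ≫ f = 0) : E.conflation k' f := by
  obtain ⟨σ, hσ⟩ := E.exists_lift h (k' ≫ s) (by simp [reassoc_of% hs, w])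
  have σρ : σ ≫ ρ = 𝟙 K' := by simp [← cancel_mono k', hρ, reassoc_of% hσ, hs]
  obtain ⟨θ, hθ⟩ := E.exists_lift h (𝟙 M - r ≫ s) (by simp [reassoc_of% hs])
  have θρ : θ ≫ ρ = 0 := by simp [← cancel_mono k', hρ, reassoc_of% hθ, hs]
  have hp : IsPushout k ρ r k' := by
    refine ⟨⟨hρ.symm⟩, ⟨PushoutCocone.IsColimit.mk _ (fun c => s ≫ c.inl) ?_ ?_ ?_⟩⟩
    · intro c
      have : (𝟙 M - r ≫ s) ≫ c.inl = 0 := by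
        rw [← hθ, Category.assoc, c.condition, ← Category.assoc, θρ, zero_comp]
      rw [Preadditive.sub_comp, Category.id_comp, sub_eq_zero, Category.assoc] at this
      exact this.symm
    · intro c
      rw [← Category.assoc, ← hσ, Category.assoc, c.condition, ← Category.assoc, σρ,
        Category.id_comp]
    · intro c m hm _
      rw [← hm, ← Category.assoc, hs, Category.id_comp]
  exact E.conflation_of_isPushout h hp rfl w

end ExactStructure

namespace IsWIC

variable {E : ExactStructure 𝒜}

lemma exists_splitting (hwic : IsWIC E) {M M' : 𝒜} {r : M ⟶ M'} {s : M' ⟶ M}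
    (hs : s ≫ r = 𝟙 M') :
    ∃ (L : 𝒜) (l : L ⟶ M) (q : M ⟶ L), l ≫ r = 0 ∧ l ≫ q = 𝟙 L ∧ q ≫ l + r ≫ s = 𝟙 M := by
  obtain ⟨L, l, hl⟩ := hwic r s hs
  obtain ⟨q, hlq, hsum⟩ := E.exists_retraction_of_section hl hs
  exact ⟨L, l, q, E.comp_zero hl, hlq, hsum⟩

/-- If `M = L ⊕ M'` via `r`, then `L` lies in the kernel `K` of `r ≫ f`, as a direct summand; its
complement in `K` is the kernel of `f`. -/
lemma exists_conflation_of_splitEpi_comp (hwic : IsWIC E) {K M M' B : 𝒜} {k : K ⟶ M} {r : M ⟶ M'}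
    {f : M' ⟶ B} (h : E.conflation k (r ≫ f)) {s : M' ⟶ M} (hs : s ≫ r = 𝟙 M') :
    ∃ (K' : 𝒜) (j : K' ⟶ K) (ρ : K ⟶ K') (k' : K' ⟶ M'), j ≫ ρ = 𝟙 K' ∧ E.conflation k' f := by
  obtain ⟨L, l, q, hlr, hlq, hM⟩ := hwic.exists_splitting hs
  obtain ⟨m, hm⟩ := E.exists_lift h l (by rw [← Category.assoc, hlr, zero_comp])
  obtain ⟨K', j, ρ, hj, hjρ, hK⟩ :=
    hwic.exists_splitting (r := k ≫ q) (s := m) (by rw [← Category.assoc, hm, hlq])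
  have := E.mono_of_conflation h
  have : Mono j := mono_of_mono_fac hjρ
  have hjk : (j ≫ k ≫ r) ≫ s = j ≫ k := by
    rw [Category.assoc, Category.assoc, eq_sub_of_add_eq' hM]
    simp [reassoc_of% hj]
  have : Mono ((j ≫ k ≫ r) ≫ s) := hjk ▸ inferInstance
  have : Mono (j ≫ k ≫ r) := mono_of_mono _ s
  have hρ : ρ ≫ j ≫ k ≫ r = k ≫ r := by
    rw [← Category.assoc, eq_sub_of_add_eq hK]
    simp [reassoc_of% hm, hlr]
  exact ⟨K', j, ρ, j ≫ k ≫ r, hjρ,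
    E.conflation_of_splitEpi_comp h hs hρ (by simp [E.comp_zero h])⟩

end IsWIC

namespace TFibO

variable {E : ExactStructure 𝒜} {Y : Set 𝒜}

lemma of_splitEpi_comp (hwic : IsWIC E)
    (hY : ∀ {K' K : 𝒜} (j : K' ⟶ K) (ρ : K ⟶ K'), j ≫ ρ = 𝟙 K' → K ∈ Y → K' ∈ Y)
    {M M' B : 𝒜} {r : M ⟶ M'} {f : M' ⟶ B} (h : TFibO E Y (r ≫ f)) {s : M' ⟶ M}
    (hs : s ≫ r = 𝟙 M') : TFibO E Y f := by
  obtain ⟨K, k, hk, hK⟩ := h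
  obtain ⟨K', j, ρ, k', hjρ, hk'⟩ := hwic.exists_conflation_of_splitEpi_comp hk hs
  exact ⟨K', k', hk', hY j ρ hjρ hK⟩

lemma biprod_desc_comp (hwic : IsWIC E) (hY : ∀ K W : 𝒜, K ∈ Y → W ∈ Y → (K ⊞ W) ∈ Y)
    {M B W : 𝒜} {d : M ⟶ B} (h : TFibO E Y d) (hW : W ∈ Y) (g : W ⟶ M) :
    TFibO E Y (biprod.desc d (g ≫ d)) := by
  obtain ⟨K, k, hk, hK⟩ := h
  obtain ⟨_, _, hg⟩ := hwic (biprod.desc (𝟙 M) g) biprod.inl (by simp)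
  obtain ⟨N, n, hn⟩ := E.deflation_comp hg hk
  obtain ⟨a, ha⟩ := E.exists_lift hk (n ≫ biprod.desc (𝟙 M) g) (by
    rw [Category.assoc, E.comp_zero hn])
  have := E.mono_of_conflation hk
  let κ : K ⊞ W ⟶ M ⊞ W := biprod.desc (k ≫ biprod.inl) (biprod.lift (-g) (𝟙 W))
  have hκ : κ ≫ biprod.desc (𝟙 M) g = biprod.fst ≫ k := by ext <;> simp [κ]
  have hκ' : κ ≫ biprod.snd = biprod.snd := by ext <;> simp [κ]
  have hM : biprod.desc (𝟙 M) g ≫ d = biprod.desc d (g ≫ d) := by ext <;> simp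
  have : Mono κ := by
    refine Preadditive.mono_of_cancel_zero _ fun {Z} z hz => biprod.hom_ext _ _ ?_ ?_
    · simp [← cancel_mono k, ← hκ, reassoc_of% hz]
    · simp [← hκ', reassoc_of% hz]
  refine ⟨K ⊞ W, κ, hM ▸ E.conflation_of_mono hn ?_ (a := biprod.lift a (n ≫ biprod.snd)) ?_,
    hY K W hK hW⟩
  · rw [← Category.assoc, hκ, Category.assoc, E.comp_zero hk, comp_zero]
  · have hfst : biprod.desc (𝟙 M) g = biprod.fst + biprod.snd ≫ g := by ext <;> simp
    rw [hfst] at ha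
    ext <;> simp [κ, ha]

end TFibO

namespace Ext1IsZero

variable {E : ExactStructure 𝒜} {A B : 𝒜}

lemma exists_lift (hext : Ext1IsZero E A B) {M C : 𝒜} {k : B ⟶ M} {d : M ⟶ C}
    (h : E.conflation k d) (t : A ⟶ C) : ∃ g : A ⟶ M, g ≫ d = t := by
  obtain ⟨P, f', d', -, -, hp, -⟩ := E.pullback_deflation h t
  have hw : k ≫ d = (0 : B ⟶ A) ≫ t := by rw [E.comp_zero h, zero_comp]
  have hpull : E.conflation (hp.lift k 0 hw) d' :=
    E.conflation_of_isPullback h hp (by simp) (by simp)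
  obtain ⟨r, hr⟩ := hext _ _ hpull
  obtain ⟨s, hs⟩ := E.exists_section_of_retraction hpull hr
  exact ⟨s ≫ f', by rw [Category.assoc, hp.w, ← Category.assoc, hs, Category.id_comp]⟩

lemma exists_extension (hext : Ext1IsZero E A B) {C M : 𝒜} {i : C ⟶ M} {d : M ⟶ A}
    (h : E.conflation i d) (f : C ⟶ B) : ∃ g : M ⟶ B, i ≫ g = f := by
  obtain ⟨P, f', i', -, -, hp, -⟩ := E.pushout_inflation h f
  have hw : i ≫ d = f ≫ (0 : B ⟶ A) := by rw [E.comp_zero h, comp_zero]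
  have hpush : E.conflation i' (hp.desc d 0 hw) :=
    E.conflation_of_isPushout h hp (by simp) (by simp)
  obtain ⟨r, hr⟩ := hext _ _ hpush
  exact ⟨f' ≫ r, by rw [← Category.assoc, hp.w, Category.assoc, hr, Category.comp_id]⟩

lemma of_retract_right {B' : 𝒜} (hext : Ext1IsZero E A B) (j : B' ⟶ B) (ρ : B ⟶ B')
    (hjρ : j ≫ ρ = 𝟙 B') : Ext1IsZero E A B' := by
  intro M i d h
  obtain ⟨g, hg⟩ := hext.exists_extension h j
  exact ⟨g ≫ ρ, by rw [← Category.assoc, hg, hjρ]⟩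

lemma biprod_right {B' : 𝒜} (hext : Ext1IsZero E A B) (hext' : Ext1IsZero E A B') :
    Ext1IsZero E A (B ⊞ B') := by
  intro M i d h
  obtain ⟨g, hg⟩ := hext.exists_extension h biprod.fst
  obtain ⟨g', hg'⟩ := hext'.exists_extension h biprod.snd
  exact ⟨biprod.lift g g', by ext <;> simp [hg, hg']⟩

end Ext1IsZero

lemma additivelyClosed_setOf_ext1IsZero (E : ExactStructure 𝒜) (X : Set 𝒜) :
    AdditivelyClosed {B | ∀ A ∈ X, Ext1IsZero E A B} := by
  refine ⟨fun A _ M i d _ => ⟨0, (isZero_zero 𝒜).eq_of_src _ _⟩, ?_, ?_, ?_⟩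
  · exact fun B B' hB hB' A hA => Ext1IsZero.biprod_right (hB A hA) (hB' A hA)
  · exact fun e hB A hA => Ext1IsZero.of_retract_right (hB A hA) e.inv e.hom e.inv_hom_id
  · exact fun j ρ hjρ hB A hA => Ext1IsZero.of_retract_right (hB A hA) j ρ hjρ

lemma IsCotorsionPair.additivelyClosed_right {E : ExactStructure 𝒜} {X Y : Set 𝒜}
    (hcp : IsCotorsionPair E X Y) : AdditivelyClosed Y :=
  Set.ext hcp.2 ▸ additivelyClosed_setOf_ext1IsZero E X

theorem stmt_11_general (E : ExactStructure 𝒜) (hwic : IsWIC E) {ω Y : Set 𝒜}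
    (hY : AdditivelyClosed Y) (hωY : ω ⊆ Y) (hext : ∀ V ∈ ω, ∀ K ∈ Y, Ext1IsZero E V K)
    {A B : 𝒜} (α : A ⟶ B) (hα : WeqO E ω Y α) {W : 𝒜} (t : W ⟶ B) (ht : IsRightApprox ω t) :
    TFibO E Y (biprod.desc α t) := by
  obtain ⟨W', hW', t', K, k, hk, hK⟩ := hα
  obtain ⟨-, biprod_mem, -, retract_mem⟩ := hY
  obtain ⟨g, hg⟩ := Ext1IsZero.exists_lift (hext W ht.1 K hK) hk t
  have hsum : TFibO E Y (biprod.desc (biprod.desc α t') t) :=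
    hg ▸ TFibO.biprod_desc_comp hwic biprod_mem ⟨K, k, hk, hK⟩ (hωY ht.1) g
  obtain ⟨h, hh⟩ := ht.2 W' hW' t'
  let s : A ⊞ W ⟶ (A ⊞ W') ⊞ W := biprod.map biprod.inl (𝟙 W)
  let r : (A ⊞ W') ⊞ W ⟶ A ⊞ W :=
    biprod.desc (biprod.desc biprod.inl (h ≫ biprod.inr)) biprod.inr
  have hsr : s ≫ r = 𝟙 (A ⊞ W) := by ext <;> simp [s, r]
  have hr : r ≫ biprod.desc α t = biprod.desc (biprod.desc α t') t := by ext <;> simp [r, hh]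
  exact TFibO.of_splitEpi_comp hwic retract_mem (hr ▸ hsum) hsr

/-- For `α ∈ Weq_ω` and any right `ω`-approximation `t` of the target,
`(α,t)` is a deflation with kernel in `𝒴`. -/
theorem stmt_11 (E : ExactStructure 𝒜) (hwic : IsWIC E) (X Y : Set 𝒜)
    (hcp : IsCotorsionPair E X Y) (hcomp : IsCompleteCP E X Y)
    (hher : IsHereditaryCP E X Y)
    {A B : 𝒜} (α : A ⟶ B) (hα : WeqO E (X ∩ Y) Y α)
    {W : 𝒜} (t : W ⟶ B) (ht : IsRightApprox (X ∩ Y) t) :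
    TFibO E Y (biprod.desc α t) := by
  exact stmt_11_general E hwic hcp.additivelyClosed_right Set.inter_subset_right
    (fun V hV => (hcp.1 V).1 hV.1) α hα t ht
end

section
/- Let 𝒜 be a weakly idempotent complete exact category and (𝒳,𝒴) a hereditary complete cotorsion pair in 𝒜 with ω = 𝒳∩𝒴 contravariantly finite. Let α : A→B and β : B→C be morphisms in 𝒜 such that α ∈ TFib_ω (α is a deflation with kernel in 𝒴) and βα ∈ Weq_ω. Then β ∈ Weq_ω. -/
open CategoryTheory Limits ZeroObject

universe v u

variable {𝒜 : Type u} [Category.{v} 𝒜] [Preadditive 𝒜] [HasZeroObject 𝒜]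
  [HasBinaryBiproducts 𝒜]

/-!
Writing `(β, t) : B ⊞ W ⟶ C`, one has `(α ≫ β, t) = (α ⊞ 𝟙) ≫ (β, t)`, and `α ⊞ 𝟙` is a pullback
of `α`, hence a deflation with the same kernel. It therefore suffices to show that if `f` and
`f ≫ g` are deflations with kernel in `Y`, then so is `g`. Weak idempotent completeness makes `g` a
deflation, and its kernel is the cokernel of the inflation `ker f ⟶ ker (f ≫ g)`, which lies in `Y`
by heredity.
-/

theorem isPullback_biprod_map_id {A B : 𝒜} (f : A ⟶ B) (W : 𝒜) :
    IsPullback (biprod.fst : A ⊞ W ⟶ A) (biprod.map f (𝟙 W)) f biprod.fst :=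
  .of_bot (by simp) (by simp) (.of_has_biproduct B W)

namespace ExactStructure.conflation

variable {E : ExactStructure 𝒜} {X Y Z : 𝒜} {i : X ⟶ Y} {d : Y ⟶ Z}

theorem isPullback (h : E.conflation i d) :
    IsPullback i (0 : X ⟶ 0) d (0 : (0 : 𝒜) ⟶ Z) := by
  obtain ⟨hi⟩ := E.isKernel h
  have fork_condition (s : PullbackCone d (0 : (0 : 𝒜) ⟶ Z)) : s.fst ≫ d = 0 := by
    simp [s.condition]
  exact IsPullback.of_isLimit' ⟨by simp [E.comp_zero h]⟩ (PullbackCone.IsLimit.mk _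
    (fun s => hi.lift (KernelFork.ofι s.fst (fork_condition s)))
    (fun s => hi.fac _ WalkingParallelPair.zero)
    (fun s => by subsingleton)
    (fun s m hm _ => Fork.IsLimit.hom_ext hi
      (hm.trans (hi.fac (KernelFork.ofι s.fst (fork_condition s)) WalkingParallelPair.zero).symm)))

theorem isPushout (h : E.conflation i d) :
    IsPushout i (0 : X ⟶ 0) d (0 : (0 : 𝒜) ⟶ Z) := by
  obtain ⟨hd⟩ := E.isCokernel h
  have cofork_condition (s : PushoutCocone i (0 : X ⟶ (0 : 𝒜))) : i ≫ s.inl = 0 := by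
    simp [s.condition]
  exact IsPushout.of_isColimit' ⟨by simp [E.comp_zero h]⟩ (PushoutCocone.IsColimit.mk _
    (fun s => hd.desc (CokernelCofork.ofπ s.inl (cofork_condition s)))
    (fun s => hd.fac _ WalkingParallelPair.one)
    (fun s => by subsingleton)
    (fun s m hm _ => Cofork.IsColimit.hom_ext hd
      (hm.trans (hd.fac (CokernelCofork.ofπ s.inl (cofork_condition s))
        WalkingParallelPair.one).symm)))

theorem exists_lift (h : E.conflation i d) {T : 𝒜} (x : T ⟶ Y) (hx : x ≫ d = 0) :
    ∃ y : T ⟶ X, y ≫ i = x :=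
  ⟨h.isPullback.lift x 0 (by simp [hx]), h.isPullback.lift_fst _ _ _⟩

theorem mono (h : E.conflation i d) : Mono i :=
  ⟨fun _ _ hab => h.isPullback.hom_ext hab (by subsingleton)⟩

theorem of_isPullback (h : E.conflation i d) {X' : 𝒜} {i' : X' ⟶ Y}
    (hi' : IsPullback i' (0 : X' ⟶ 0) d (0 : (0 : 𝒜) ⟶ Z)) : E.conflation i' d :=
  E.conflation_iso (h.isPullback.isoIsPullback _ _ hi') (Iso.refl _) (Iso.refl _) h
    (by simp) (by simp)

theorem of_isPushout (h : E.conflation i d) {Z' : 𝒜} {d' : Y ⟶ Z'}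
    (hd' : IsPushout i (0 : X ⟶ 0) d' (0 : (0 : 𝒜) ⟶ Z')) : E.conflation i d' :=
  E.conflation_iso (Iso.refl _) (Iso.refl _) (h.isPushout.isoIsPushout _ _ hd') h
    (by simp) (by simp)

theorem exists_of_pullback (h : E.conflation i d) {Y' Z' : 𝒜} {f : Z' ⟶ Z} {f' : Y' ⟶ Y}
    {d' : Y' ⟶ Z'} (sq : IsPullback f' d' d f) :
    ∃ i' : X ⟶ Y', i' ≫ f' = i ∧ E.conflation i' d' := by
  obtain ⟨Y₁, f₁, d₁, K, k, sq₁, hk⟩ := E.pullback_deflation h f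
  have hd' : E.conflation (k ≫ (sq₁.isoIsPullback _ _ sq).hom) d' :=
    E.conflation_iso (Iso.refl _) (sq₁.isoIsPullback _ _ sq) (Iso.refl _) hk (by simp) (by simp)
  have kernel_sq : IsPullback i (0 : X ⟶ 0) d ((0 : (0 : 𝒜) ⟶ Z') ≫ f) := by
    simpa using h.isPullback
  exact ⟨_, sq.lift_fst _ _ _, hd'.of_isPullback (.of_right' kernel_sq sq)⟩

theorem exists_biprod_map_id (h : E.conflation i d) (W : 𝒜) :
    ∃ i' : X ⟶ Y ⊞ W, E.conflation i' (biprod.map d (𝟙 W)) := by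
  obtain ⟨i', -, hi'⟩ := h.exists_of_pullback (isPullback_biprod_map_id d W)
  exact ⟨i', hi'⟩

theorem exists_of_pushout (h : E.conflation i d) {X' Y' : 𝒜} {f : X ⟶ X'} {f' : Y ⟶ Y'}
    {i' : X' ⟶ Y'} (sq : IsPushout i f f' i') :
    ∃ d' : Y' ⟶ Z, f' ≫ d' = d ∧ E.conflation i' d' := by
  obtain ⟨Y₁, f₁, i₁, Q, q, sq₁, hq⟩ := E.pushout_inflation h f
  have hi' : E.conflation i' ((sq₁.isoIsPushout _ _ sq).inv ≫ q) :=
    E.conflation_iso (Iso.refl _) (sq₁.isoIsPushout _ _ sq) (Iso.refl _) hq (by simp) (by simp)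
  have cokernel_sq : IsPushout i (f ≫ (0 : X' ⟶ 0)) d (0 : (0 : 𝒜) ⟶ Z) := by
    simpa using h.isPushout
  exact ⟨_, sq.inl_desc _ _ _, hi'.of_isPushout (.of_top' cokernel_sq sq)⟩

theorem exists_isPushout_of_section (h : E.conflation i d) {s : Z ⟶ Y} (hs : s ≫ d = 𝟙 Z) :
    ∃ p : Y ⟶ X, IsPushout s (0 : Z ⟶ 0) p (0 : (0 : 𝒜) ⟶ X) := by
  have := h.mono
  obtain ⟨p, hp⟩ := h.exists_lift (𝟙 Y - d ≫ s) (by simp [Preadditive.sub_comp, hs])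
  let b : BinaryBicone Z X :=
    { pt := Y
      fst := d
      snd := p
      inl := s
      inr := i
      inl_fst := hs
      inl_snd := by simp [← cancel_mono i, hp, Preadditive.comp_sub, reassoc_of% hs]
      inr_fst := E.comp_zero h
      inr_snd := by
        simp [← cancel_mono i, hp, Preadditive.comp_sub, reassoc_of% E.comp_zero h] }
  exact ⟨p, .inl_snd' (isBinaryBilimitOfTotal b (by simp [b, hp]))⟩

theorem exists_conflation_kernels_of_comp {P Q C J K M : 𝒜} {f : P ⟶ Q} {g : Q ⟶ C}
    {j : J ⟶ P} {k : K ⟶ P} {m : M ⟶ Q}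
    (hf : E.conflation j f) (hfg : E.conflation k (f ≫ g)) (hg : E.conflation m g) :
    ∃ (u : J ⟶ K) (v : K ⟶ M), E.conflation u v := by
  obtain ⟨u, -, huv⟩ := hf.exists_of_pullback (.of_bot' hfg.isPullback hg.isPullback)
  exact ⟨u, _, huv⟩

end ExactStructure.conflation

namespace IsDeflation

variable {E : ExactStructure 𝒜} {P Q C : 𝒜}

theorem comp {f : P ⟶ Q} {g : Q ⟶ C} (hf : IsDeflation E f) (hg : IsDeflation E g) :
    IsDeflation E (f ≫ g) := by
  obtain ⟨_, _, hf⟩ := hf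
  obtain ⟨_, _, hg⟩ := hg
  exact E.deflation_comp hf hg

theorem iso_comp {g : Q ⟶ C} (hg : IsDeflation E g) (e : P ≅ Q) : IsDeflation E (e.hom ≫ g) := by
  obtain ⟨K, k, hk⟩ := hg
  exact ⟨K, k ≫ e.inv, E.conflation_iso (Iso.refl _) e.symm (Iso.refl _) hk (by simp) (by simp)⟩

theorem biprod_map_id {f : P ⟶ Q} (hf : IsDeflation E f) (W : 𝒜) :
    IsDeflation E (biprod.map f (𝟙 W)) := by
  obtain ⟨K, k, hk⟩ := hf
  exact ⟨K, hk.exists_biprod_map_id W⟩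

-- The kernel of `P ⊞ Q ⟶ Q ⟶ C` contains `P` as a summand, whose complement is the kernel of `g`.
theorem of_snd_comp (hE : IsWIC E) {g : Q ⟶ C}
    (h : IsDeflation E ((biprod.snd : P ⊞ Q ⟶ Q) ≫ g)) : IsDeflation E g := by
  obtain ⟨L, l, hl⟩ := h
  obtain ⟨s, hs⟩ := hl.exists_lift biprod.inl (by simp)
  have section_fst : s ≫ l ≫ biprod.fst = 𝟙 P := by simp [reassoc_of% hs]
  obtain ⟨M, n, hn⟩ := hE (l ≫ biprod.fst) s section_fst
  obtain ⟨p, hp⟩ := hn.exists_isPushout_of_section section_fst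
  have inl_snd : IsPushout (s ≫ l) (0 : P ⟶ 0) biprod.snd (0 : (0 : 𝒜) ⟶ Q) := by
    simpa only [hs] using IsPushout.inl_snd P Q
  obtain ⟨d, hd, hd'⟩ := hl.exists_of_pushout (.of_left' inl_snd hp)
  obtain rfl : d = g := (cancel_epi _).1 hd
  exact ⟨M, _, hd'⟩

theorem desc_comp (hE : IsWIC E) {f : P ⟶ Q} {g : Q ⟶ C} (h : IsDeflation E (f ≫ g)) :
    IsDeflation E (biprod.desc (f ≫ g) g) := by
  have desc_id : IsDeflation E (biprod.desc (𝟙 C) g) := hE _ biprod.inl (by simp)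
  have factor : biprod.map (f ≫ g) (𝟙 Q) ≫ biprod.desc (𝟙 C) g = biprod.desc (f ≫ g) g := by
    ext <;> simp
  exact factor ▸ (h.biprod_map_id Q).comp desc_id

-- A shear of `P ⊞ Q` turns `(f ≫ g, g)` into `(0, g)`.
theorem of_comp (hE : IsWIC E) {f : P ⟶ Q} {g : Q ⟶ C} (h : IsDeflation E (f ≫ g)) :
    IsDeflation E g := by
  have shear : (Biprod.unipotentUpper f).symm.hom ≫ biprod.desc (f ≫ g) g = biprod.snd ≫ g := by
    ext <;> simp [reassoc_of% Biprod.inl_ofComponents, reassoc_of% Biprod.inr_ofComponents]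
  exact of_snd_comp hE (shear ▸ (desc_comp hE h).iso_comp (Biprod.unipotentUpper f).symm)

end IsDeflation

namespace TFibO

variable {E : ExactStructure 𝒜} {Y : Set 𝒜} {P Q C : 𝒜} {f : P ⟶ Q}

theorem biprod_map_id (hf : TFibO E Y f) (W : 𝒜) : TFibO E Y (biprod.map f (𝟙 W)) := by
  obtain ⟨K, k, hk, hK⟩ := hf
  obtain ⟨k', hk'⟩ := hk.exists_biprod_map_id W
  exact ⟨K, k', hk', hK⟩

theorem of_comp (hE : IsWIC E)
    (hY : ∀ {K A B : 𝒜} (i : K ⟶ A) (d : A ⟶ B), E.conflation i d → K ∈ Y → A ∈ Y → B ∈ Y)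
    {g : Q ⟶ C} (hf : TFibO E Y f) (hfg : TFibO E Y (f ≫ g)) : TFibO E Y g := by
  obtain ⟨J, j, hj, hJ⟩ := hf
  obtain ⟨K, k, hk, hK⟩ := hfg
  obtain ⟨M, m, hm⟩ : IsDeflation E g := .of_comp hE ⟨K, k, hk⟩
  obtain ⟨u, v, huv⟩ := hj.exists_conflation_kernels_of_comp hk hm
  exact ⟨M, m, hm, hY u v huv hJ hK⟩

end TFibO

theorem stmt_12_general (E : ExactStructure 𝒜) (hwic : IsWIC E) (ω Y : Set 𝒜)
    (hY : ∀ {K A B : 𝒜} (i : K ⟶ A) (d : A ⟶ B), E.conflation i d → K ∈ Y → A ∈ Y → B ∈ Y)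
    {A B C : 𝒜} (α : A ⟶ B) (β : B ⟶ C) (hα : TFibO E Y α) (hβα : WeqO E ω Y (α ≫ β)) :
    WeqO E ω Y β := by
  obtain ⟨W, hW, t, hdesc⟩ := hβα
  have factor : biprod.desc (α ≫ β) t = biprod.map α (𝟙 W) ≫ biprod.desc β t := by
    ext <;> simp
  rw [factor] at hdesc
  exact ⟨W, hW, t, (hα.biprod_map_id W).of_comp hwic hY hdesc⟩

/-- If `α ∈ TFib_ω` and `βα ∈ Weq_ω` then `β ∈ Weq_ω`. -/
theorem stmt_12 (E : ExactStructure 𝒜) (hwic : IsWIC E) (X Y : Set 𝒜)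
    (hcp : IsCotorsionPair E X Y) (hcomp : IsCompleteCP E X Y)
    (hher : IsHereditaryCP E X Y) (hcf : IsContravariantlyFinite (X ∩ Y))
    {A B C : 𝒜} (α : A ⟶ B) (β : B ⟶ C)
    (hα : TFibO E Y α) (hβα : WeqO E (X ∩ Y) Y (α ≫ β)) :
    WeqO E (X ∩ Y) Y β :=
  stmt_12_general E hwic (X ∩ Y) Y hher.2 α β hα hβα
end

section
/- Let (CoFib, Fib, Weq) be a closed model structure on an exact category 𝒜, with 𝒞 the class of cofibrant objects and T𝓕 the class of trivially fibrant objects. Then: (1) if every inflation with cofibrant cokernel is a cofibration, then Ext¹(C,Y) = 0 for all C∈𝒞 and Y∈T𝓕; (3) if every trivial fibration is a deflation, then every object A with Ext¹(A,Y)=0 for all Y∈T𝓕 belongs to 𝒞; (4) if every cofibration is an inflation, then every object B with Ext¹(C,B)=0 for all C∈𝒞 belongs to T𝓕. -/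
open CategoryTheory Limits ZeroObject

universe v u

variable {𝒜 : Type u} [Category.{v} 𝒜] [Preadditive 𝒜] [HasZeroObject 𝒜]
  [HasBinaryBiproducts 𝒜]

/-!
A model structure enters only through the weak factorization system `(C, F ⊓ W)`, whose right
class is stable under base change and whose left class is stable under cobase change. The kernel
`K` of a trivial fibration `Z ⟶ A` is its base change along `0 ⟶ A`, hence trivially fibrant;
factoring `0 ⟶ A` as a cofibration followed by a trivial fibration and splitting the resulting
conflation `K ⟶ Z ⟶ A` makes `A` a retract of the cofibrant object `Z`. Part (4) is dual, and
part (1) lifts the identity of `B` along the inflation of a conflation `B ⟶ M ⟶ A`.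
-/

open MorphismProperty

section ZeroMorphisms

variable {𝒟 : Type u} [Category.{v} 𝒟] [HasZeroObject 𝒟] [HasZeroMorphisms 𝒟]

theorem isPullback_of_isLimit_kernelFork {K X Y : 𝒟} {k : K ⟶ X} {f : X ⟶ Y} {w : k ≫ f = 0}
    (h : IsLimit (KernelFork.ofι k w)) :
    IsPullback k (0 : K ⟶ (0 : 𝒟)) f (0 : (0 : 𝒟) ⟶ Y) :=
  ⟨⟨by simp only [w, comp_zero]⟩, ⟨PullbackCone.IsLimit.mk _
    (fun s ↦ h.lift (KernelFork.ofι s.fst (by rw [s.condition, comp_zero])))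
    (fun _ ↦ Fork.IsLimit.lift_ι h)
    (fun _ ↦ (isZero_zero 𝒟).eq_of_tgt _ _)
    (fun _ _ hm _ ↦ Fork.IsLimit.hom_ext h <| by rw [Fork.IsLimit.lift_ι h]; exact hm)⟩⟩

theorem isPushout_of_isColimit_cokernelCofork {X Y Q : 𝒟} {f : X ⟶ Y} {q : Y ⟶ Q}
    {w : f ≫ q = 0} (h : IsColimit (CokernelCofork.ofπ q w)) :
    IsPushout f (0 : X ⟶ (0 : 𝒟)) q (0 : (0 : 𝒟) ⟶ Q) :=
  ⟨⟨by simp only [w, zero_comp]⟩, ⟨PushoutCocone.IsColimit.mk _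
    (fun s ↦ h.desc (CokernelCofork.ofπ s.inl (by rw [s.condition, zero_comp])))
    (fun _ ↦ Cofork.IsColimit.π_desc h)
    (fun _ ↦ (isZero_zero 𝒟).eq_of_src _ _)
    (fun _ _ hm _ ↦ Cofork.IsColimit.hom_ext h <| by rw [Cofork.IsColimit.π_desc h]; exact hm)⟩⟩

theorem exists_retraction_of_hasLiftingProperty {B M : 𝒟} (i : B ⟶ M)
    [HasLiftingProperty i (0 : B ⟶ (0 : 𝒟))] : ∃ r : M ⟶ B, i ≫ r = 𝟙 B := by
  have sq : CommSq (𝟙 B) i (0 : B ⟶ (0 : 𝒟)) 0 := ⟨by simp only [comp_zero]⟩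
  exact ⟨sq.lift, sq.fac_left⟩

end ZeroMorphisms

section Retracts

variable {𝒟 : Type u} [Category.{v} 𝒟] [Preadditive 𝒟] [HasZeroObject 𝒟]
  {P : MorphismProperty 𝒟} {A Z : 𝒟}

theorem Cofibrant.of_retract [P.IsStableUnderRetracts] (h : Retract A Z) (hZ : Cofibrant P Z) :
    Cofibrant P A :=
  MorphismProperty.of_retract (g := (0 : (0 : 𝒟) ⟶ Z))
    { i := Arrow.homMk (𝟙 _) h.i
      r := Arrow.homMk (𝟙 _) h.r } hZ

theorem Fibrant.of_retract [P.IsStableUnderRetracts] (h : Retract A Z) (hZ : Fibrant P Z) :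
    Fibrant P A :=
  MorphismProperty.of_retract (g := (0 : Z ⟶ (0 : 𝒟)))
    { i := Arrow.homMk h.i (𝟙 _)
      r := Arrow.homMk h.r (𝟙 _) } hZ

end Retracts

section Conflations

variable {E : ExactStructure 𝒜} {A B M : 𝒜} {i : B ⟶ M} {d : M ⟶ A}

theorem Ext1IsZero.nonempty_retract_left (h : Ext1IsZero E A B) (hc : E.conflation i d) :
    Nonempty (Retract B M) :=
  let ⟨r, hr⟩ := h i d hc
  ⟨⟨i, r, hr⟩⟩

theorem Ext1IsZero.nonempty_retract_right (h : Ext1IsZero E A B) (hc : E.conflation i d) :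
    Nonempty (Retract A M) := by
  obtain ⟨r, hr⟩ := h i d hc
  obtain ⟨hd⟩ := E.isCokernel hc
  have : IsSplitMono i := ⟨⟨⟨r, hr⟩⟩⟩
  let splitting := binaryBiconeOfIsSplitMonoOfCokernel hd
  exact ⟨⟨splitting.inr, d, splitting.inr_snd⟩⟩

theorem ExactStructure.fibrant_of_conflation {R : MorphismProperty 𝒜}
    [R.IsStableUnderBaseChange] (hc : E.conflation i d) (hd : R d) : Fibrant R B :=
  let ⟨hi⟩ := E.isKernel hc
  R.of_isPullback (isPullback_of_isLimit_kernelFork hi) hd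

theorem ExactStructure.cofibrant_of_conflation {L : MorphismProperty 𝒜}
    [L.IsStableUnderCobaseChange] (hc : E.conflation i d) (hi : L i) : Cofibrant L A :=
  let ⟨hd⟩ := E.isCokernel hc
  L.of_isPushout (isPushout_of_isColimit_cokernelCofork hd).flip hi

end Conflations

section Orthogonality

variable {E : ExactStructure 𝒜} {L R : MorphismProperty 𝒜}

theorem ext1IsZero_of_hasLiftingProperty {A B : 𝒜}
    (h : ∀ {M : 𝒜} (i : B ⟶ M) (d : M ⟶ A), E.conflation i d →
      HasLiftingProperty i (0 : B ⟶ (0 : 𝒜))) : Ext1IsZero E A B :=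
  fun i d hc ↦
    have := h i d hc
    exists_retraction_of_hasLiftingProperty i

theorem cofibrant_of_ext1IsZero [HasFactorization L R] [L.IsStableUnderRetracts]
    [R.IsStableUnderBaseChange] {A : 𝒜}
    (hR : ∀ {X : 𝒜} (q : X ⟶ A), R q → IsDeflation E q)
    (hA : ∀ B : 𝒜, Fibrant R B → Ext1IsZero E A B) : Cofibrant L A := by
  let φ := factorizationData L R (0 : (0 : 𝒜) ⟶ A)
  obtain ⟨K, k, hc⟩ := hR φ.p φ.hp
  have hK : Fibrant R K := E.fibrant_of_conflation hc φ.hp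
  obtain ⟨retract⟩ := Ext1IsZero.nonempty_retract_right (hA K hK) hc
  have hZ : L (0 : (0 : 𝒜) ⟶ φ.Z) := (isZero_zero 𝒜).eq_of_src φ.i 0 ▸ φ.hi
  exact Cofibrant.of_retract retract hZ

theorem fibrant_of_ext1IsZero [HasFactorization L R] [R.IsStableUnderRetracts]
    [L.IsStableUnderCobaseChange] {B : 𝒜}
    (hL : ∀ {Y : 𝒜} (j : B ⟶ Y), L j → IsInflation E j)
    (hB : ∀ A : 𝒜, Cofibrant L A → Ext1IsZero E A B) : Fibrant R B := by
  let φ := factorizationData L R (0 : B ⟶ (0 : 𝒜))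
  obtain ⟨Q, d, hc⟩ := hL φ.i φ.hi
  have hQ : Cofibrant L Q := E.cofibrant_of_conflation hc φ.hi
  obtain ⟨retract⟩ := Ext1IsZero.nonempty_retract_left (hB Q hQ) hc
  have hZ : R (0 : φ.Z ⟶ (0 : 𝒜)) := (isZero_zero 𝒜).eq_of_tgt φ.p 0 ▸ φ.hp
  exact Fibrant.of_retract retract hZ

end Orthogonality

section ModelStructure

variable {𝒟 : Type u} [Category.{v} 𝒟]

theorem isRetractMor_of_retractArrow {A' B' A B : 𝒟} {g : A' ⟶ B'} {f : A ⟶ B}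
    (h : RetractArrow g f) : IsRetractMor g f :=
  ⟨h.i.left, h.r.left, h.i.right, h.r.right, h.retract_left, h.retract_right, h.i_w, h.r_w.symm⟩

namespace IsModelStructure

variable {C F W : MorphismProperty 𝒟}

theorem isWeakFactorizationSystem_trivialFibrations (hms : IsModelStructure C F W) :
    IsWeakFactorizationSystem C (F ⊓ W) := by
  have : C.IsStableUnderRetracts :=
    ⟨fun h ↦ hms.retract_cofib _ _ (isRetractMor_of_retractArrow h)⟩
  have : F.IsStableUnderRetracts :=
    ⟨fun h ↦ hms.retract_fib _ _ (isRetractMor_of_retractArrow h)⟩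
  have : W.IsStableUnderRetracts :=
    ⟨fun h ↦ hms.retract_weq _ _ (isRetractMor_of_retractArrow h)⟩
  have : HasFactorization C (F ⊓ W) :=
    ⟨fun f ↦
      let ⟨_, j, q, hjq, hj, hq⟩ := hms.fact_right f
      ⟨{ Z := _, i := j, p := q, fac := hjq, hi := hj, hp := hq }⟩⟩
  refine .mk' _ _ fun i p hi hp ↦ ⟨fun {a b} sq ↦ ?_⟩
  obtain ⟨s, his, hsp⟩ := hms.lifting_right i p a b hi hp.1 hp.2 sq.w
  exact ⟨⟨⟨s, his, hsp⟩⟩⟩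

theorem weq_id (hms : IsModelStructure C F W) (X : 𝒟) : W (𝟙 X) := by
  obtain ⟨Z, i, -, -, -, hi, -⟩ := hms.fact_left (𝟙 X)
  exact hms.weq_cancel_right (𝟙 X) i hi (by rwa [Category.id_comp])

variable [Preadditive 𝒟] [HasZeroObject 𝒟]

theorem trivialObj_iff_weq_to_zero (hms : IsModelStructure C F W) {B : 𝒟} :
    TrivialObj W B ↔ W (0 : B ⟶ (0 : 𝒟)) := by
  have hid : W ((0 : (0 : 𝒟) ⟶ B) ≫ (0 : B ⟶ (0 : 𝒟))) := by
    rw [(isZero_zero 𝒟).eq_of_src (_ ≫ _) (𝟙 _)]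
    exact hms.weq_id 0
  exact ⟨fun h ↦ hms.weq_cancel_left _ _ h hid, fun h ↦ hms.weq_cancel_right _ _ h hid⟩

theorem fibrant_inf_iff (hms : IsModelStructure C F W) {B : 𝒟} :
    Fibrant (F ⊓ W) B ↔ Fibrant F B ∧ TrivialObj W B :=
  and_congr_right' hms.trivialObj_iff_weq_to_zero.symm

end IsModelStructure

end ModelStructure

theorem stmt_15_general (E : ExactStructure 𝒜) (L R : MorphismProperty 𝒜)
    [IsWeakFactorizationSystem L R] :
    ((∀ {A B Z : 𝒜} (f : A ⟶ B) (d : B ⟶ Z), E.conflation f d → Cofibrant L Z → L f) →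
      ∀ A B : 𝒜, Cofibrant L A → Fibrant R B → Ext1IsZero E A B) ∧
    ((∀ {X Y : 𝒜} (q : X ⟶ Y), R q → IsDeflation E q) →
      ∀ A : 𝒜, (∀ B : 𝒜, Fibrant R B → Ext1IsZero E A B) → Cofibrant L A) ∧
    (CofibsAreInfl E L →
      ∀ B : 𝒜, (∀ A : 𝒜, Cofibrant L A → Ext1IsZero E A B) → Fibrant R B) := by
  have : L.IsStableUnderRetracts := llp_eq_of_wfs L R ▸ inferInstance
  have : L.IsStableUnderCobaseChange := llp_eq_of_wfs L R ▸ inferInstance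
  have : R.IsStableUnderRetracts := rlp_eq_of_wfs L R ▸ inferInstance
  have : R.IsStableUnderBaseChange := rlp_eq_of_wfs L R ▸ inferInstance
  refine ⟨fun h A B hA hB ↦ ?_, fun h A hA ↦ cofibrant_of_ext1IsZero h hA,
    fun h B hB ↦ fibrant_of_ext1IsZero h hB⟩
  exact ext1IsZero_of_hasLiftingProperty fun i d hc ↦
    hasLiftingProperty_of_wfs i 0 (h i d hc hA) hB

/-- Parts (1), (3), (4) of [BR, VIII, 3.2] for exact categories. -/
theorem stmt_15 (E : ExactStructure 𝒜) (C F W : MorphismProperty 𝒜)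
    (hms : IsModelStructure C F W) :
    ((∀ {A B Z : 𝒜} (f : A ⟶ B) (d : B ⟶ Z),
        E.conflation f d → Cofibrant C Z → C f) →
      ∀ A B : 𝒜, Cofibrant C A → (Fibrant F B ∧ TrivialObj W B) → Ext1IsZero E A B) ∧
    (TrivFibsAreDefl E F W →
      ∀ A : 𝒜, (∀ B : 𝒜, (Fibrant F B ∧ TrivialObj W B) → Ext1IsZero E A B) →
        Cofibrant C A) ∧
    (CofibsAreInfl E C →
      ∀ B : 𝒜, (∀ A : 𝒜, Cofibrant C A → Ext1IsZero E A B) →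
        (Fibrant F B ∧ TrivialObj W B)) := by
  have := hms.isWeakFactorizationSystem_trivialFibrations
  simpa only [hms.fibrant_inf_iff, TrivFibsAreDefl, MorphismProperty.inf_iff, and_imp]
    using stmt_15_general E C (F ⊓ W)
end
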